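/- A continuous map f : X → Y of topological spaces is a Serre fibration if and only if the induced map S(f) : S(X) → S(Y) between singular simplicial sets is a Kan fibration. -/

import Mathlib

open CategoryTheory Simplicial

namespace HopfModel

/-- A map of simplicial sets is a *Kan fibration* if it has the right lifting property
with respect to all horn inclusions `Λ[n, k] ⟶ Δ[n]` for `n ≥ 1`, `0 ≤ k ≤ n`. -/
def IsKanFibration {X Y : SSet} (p : X ⟶ Y) : Prop :=
  ∀ (n : ℕ) (i : Fin (n + 2)), HasLiftingProperty (SSet.horn (n + 1) i).ι p

/-- The closed unit disk `Dⁿ ⊆ ℝⁿ`. -/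
noncomputable def disk (n : ℕ) : TopCat :=
  TopCat.of (Metric.closedBall (0 : EuclideanSpace ℝ (Fin n)) 1)

/-- The inclusion `Dⁿ × {0} ↪ Dⁿ × [0,1]`. -/
noncomputable def diskInclusion (n : ℕ) :
    disk n ⟶ TopCat.of (↥(Metric.closedBall (0 : EuclideanSpace ℝ (Fin n)) 1) × unitInterval) :=
  TopCat.ofHom (ContinuousMap.mk (fun x => (x, 0)) (by continuity))

/-- A continuous map is a *Serre fibration* if it has the homotopy lifting property with
respect to all disks `Dⁿ`, i.e. the right lifting property with respect to all inclusions
`Dⁿ × {0} ↪ Dⁿ × [0,1]`. -/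
def IsSerreFibration {X Y : TopCat} (f : X ⟶ Y) : Prop :=
  ∀ n : ℕ, HasLiftingProperty (diskInclusion n) f


/-- maps out of standard simplices into a singular set are continuous maps -/
noncomputable def simpEquiv (X : TopCat.{0}) (n : ℕ) :
    ((Δ[n] : SSet.{0}) ⟶ TopCat.toSSet.obj X) ≃ C(_root_.stdSimplex ℝ (Fin (n + 1)), X) :=
  SSet.yonedaEquiv.trans (X.toSSetObjEquiv _)

lemma simpEquiv_δ (X : TopCat.{0}) (n : ℕ) (φ : (Δ[n + 1] : SSet.{0}) ⟶ TopCat.toSSet.obj X)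
    (j : Fin (n + 2)) (z : _root_.stdSimplex ℝ (Fin (n + 1))) :
    simpEquiv X n (SSet.stdSimplex.δ j ≫ φ) z =
      simpEquiv X (n + 1) φ (_root_.stdSimplex.map j.succAbove z) := by
  obtain ⟨x, rfl⟩ := SSet.yonedaEquiv.symm.surjective φ
  have : SSet.stdSimplex.δ j ≫ SSet.yonedaEquiv.symm x =
    SSet.yonedaEquiv.symm ((TopCat.toSSet.obj X).δ j x) := by
    apply SSet.yonedaEquiv.injective
    rw [Equiv.apply_symm_apply]
    rfl
  rw [this]
  simp only [simpEquiv, Equiv.trans_apply, Equiv.apply_symm_apply]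
  rfl

lemma simpEquiv_comp {X Y : TopCat.{0}} (f : X ⟶ Y) (n : ℕ)
    (φ : (Δ[n] : SSet.{0}) ⟶ TopCat.toSSet.obj X) (z : _root_.stdSimplex ℝ (Fin (n + 1))) :
    simpEquiv Y n (φ ≫ TopCat.toSSet.map f) z = f (simpEquiv X n φ z) := rfl

/-- A collapse of a simplex onto a face. -/
noncomputable def collapse {n : ℕ} (j : Fin (n + 2)) :
    _root_.stdSimplex ℝ (Fin (n + 2)) → _root_.stdSimplex ℝ (Fin (n + 1)) :=
  _root_.stdSimplex.map (Function.invFun j.succAbove)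

lemma continuous_collapse {n : ℕ} (j : Fin (n + 2)) : Continuous (collapse j) :=
  _root_.stdSimplex.continuous_map _

lemma invFun_succAbove {n : ℕ} (j : Fin (n + 2)) (k : Fin (n + 1)) :
    Function.invFun j.succAbove (j.succAbove k) = k :=
  Function.leftInverse_invFun Fin.succAbove_right_injective k

lemma collapse_map {n : ℕ} (j : Fin (n + 2)) (a : _root_.stdSimplex ℝ (Fin (n + 1))) :
    collapse j (_root_.stdSimplex.map j.succAbove a) = a := by
  rw [collapse, _root_.stdSimplex.map_comp_apply]
  have : (Function.invFun j.succAbove).comp j.succAbove = id := by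
    ext k; simp [invFun_succAbove]
  rw [this, _root_.stdSimplex.map_id_apply]

lemma map_collapse {n : ℕ} (j : Fin (n + 2)) (b : _root_.stdSimplex ℝ (Fin (n + 2)))
    (hb : b j = 0) : _root_.stdSimplex.map j.succAbove (collapse j b) = b := by
  classical
  rw [collapse, _root_.stdSimplex.map_comp_apply]
  ext y
  rw [_root_.stdSimplex.map_coe, FunOnFinite.linearMap_apply_apply, Finset.sum_filter,
    Fin.sum_univ_succAbove _ j]
  simp only [Function.comp_apply, invFun_succAbove, hb, ite_self, zero_add]
  rcases Fin.eq_self_or_eq_succAbove j y with rfl | ⟨k, rfl⟩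
  · simp [hb, Fin.succAbove_ne]
  · simp

lemma map_succAbove_self {n : ℕ} (j : Fin (n + 2)) (a : _root_.stdSimplex ℝ (Fin (n + 1))) :
    (_root_.stdSimplex.map j.succAbove a) j = 0 := by
  classical
  rw [_root_.stdSimplex.map_coe, FunOnFinite.linearMap_apply_apply, Finset.sum_filter]
  simp [Fin.succAbove_ne]

lemma map_succAbove_succAbove {n : ℕ} (j : Fin (n + 2)) (k : Fin (n + 1))
    (a : _root_.stdSimplex ℝ (Fin (n + 1))) :
    (_root_.stdSimplex.map j.succAbove a) (j.succAbove k) = a k := by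
  classical
  rw [_root_.stdSimplex.map_coe, FunOnFinite.linearMap_apply_apply, Finset.sum_filter]
  simp

section glue

variable {X : TopCat.{0}} {n : ℕ} {i : Fin (n + 2)}
  (φ : (SSet.horn.{0} (n + 1) i : SSet.{0}) ⟶ TopCat.toSSet.obj X)

/-- faces of a horn -/
noncomputable def hface (j : Fin (n + 2)) (hj : j ≠ i) : C(_root_.stdSimplex ℝ (Fin (n + 1)), X) :=
  simpEquiv X n (SSet.horn.ι i j hj ≫ φ)

lemma hface_compat_lt (j k : Fin (n + 2)) (hj : j ≠ i) (hk : k ≠ i) (hjk : j < k)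
    (a c : _root_.stdSimplex ℝ (Fin (n + 1)))
    (h : _root_.stdSimplex.map j.succAbove a = _root_.stdSimplex.map k.succAbove c) :
    hface φ j hj a = hface φ k hk c := by
  obtain _ | n := n
  · exfalso
    have := Fin.val_ne_of_ne hj
    have := Fin.val_ne_of_ne hk
    have := Fin.lt_def.1 hjk
    have := j.2
    have := k.2
    have := i.2
    lia
  obtain ⟨j, rfl⟩ := j.eq_castSucc_of_ne_last (Fin.ne_last_of_lt hjk)
  obtain ⟨k, rfl⟩ := k.eq_succ_of_ne_zero (Fin.ne_zero_of_lt hjk)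
  have hle : j ≤ k := by
    have h1 := Fin.lt_def.1 hjk
    rw [Fin.val_castSucc, Fin.val_succ] at h1
    exact Fin.le_def.2 (Nat.lt_succ_iff.1 h1)
  have hak : a k = 0 := by
    have h1 := map_succAbove_succAbove j.castSucc k a
    rw [h, Fin.succAbove_castSucc_of_le _ _ hle, map_succAbove_self] at h1
    exact h1.symm
  obtain ⟨d, rfl⟩ : ∃ d, _root_.stdSimplex.map k.succAbove d = a := ⟨_, map_collapse k a hak⟩
  have hc : c = _root_.stdSimplex.map j.succAbove d := by
    rw [← collapse_map k.succ c, ← h, ← collapse_map k.succ (_root_.stdSimplex.map j.succAbove d)]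
    congr 1
    rw [_root_.stdSimplex.map_comp_apply, _root_.stdSimplex.map_comp_apply]
    congr 1
    ext x : 1
    have := SimplexCategory.δ_comp_δ hle
    have h2 := congrArg (fun q => q.toOrderHom x) this
    exact h2.symm
  subst hc
  have := SSet.horn.IsCompatible.δ_pred_comp (SSet.horn.IsCompatible.of_hom φ)
    j.castSucc k.succ hj hk hjk
  rw [Fin.pred_succ, Fin.castPred_castSucc] at this
  rw [hface, hface, ← simpEquiv_δ, ← simpEquiv_δ, this]

lemma hface_compat (j k : Fin (n + 2)) (hj : j ≠ i) (hk : k ≠ i)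
    (a c : _root_.stdSimplex ℝ (Fin (n + 1)))
    (h : _root_.stdSimplex.map j.succAbove a = _root_.stdSimplex.map k.succAbove c) :
    hface φ j hj a = hface φ k hk c := by
  rcases lt_trichotomy j k with hjk | rfl | hjk
  · exact hface_compat_lt φ j k hj hk hjk a c h
  · have : a = c := by rw [← collapse_map j a, h, collapse_map]
    rw [this]
  · exact (hface_compat_lt φ k j hk hj hjk c a h.symm).symm

/-- the topological horn -/
abbrev THorn (n : ℕ) (i : Fin (n + 2)) : Type :=
  {b : _root_.stdSimplex ℝ (Fin (n + 2)) // ∃ j, j ≠ i ∧ b j = 0}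

/-- the glued map -/
noncomputable def glue (b : THorn n i) : X :=
  hface φ b.2.choose b.2.choose_spec.1 (collapse b.2.choose b.1)

lemma glue_eq (b : THorn n i) (j : Fin (n + 2)) (hj : j ≠ i) (hb : b.1 j = 0) :
    glue φ b = hface φ j hj (collapse j b.1) := by
  apply hface_compat
  rw [map_collapse _ _ hb, map_collapse _ _ b.2.choose_spec.2]

lemma continuous_coord {n : ℕ} (j : Fin n) :
    Continuous (fun b : _root_.stdSimplex ℝ (Fin n) => b j) :=
  (continuous_apply j).comp continuous_subtype_val

lemma continuous_glue : Continuous (glue φ) := by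
  have hv : Continuous (fun b : THorn n i => b.1) := continuous_subtype_val
  refine LocallyFinite.continuous (f := fun j : {j : Fin (n + 2) // j ≠ i} =>
    Set.ofPred (fun b : THorn n i => b.1 j.1 = 0)) (locallyFinite_of_finite _) ?_ ?_ ?_
  · rw [Set.iUnion_eq_univ_iff]
    rintro ⟨b, j, hj, hb⟩
    exact ⟨⟨j, hj⟩, hb⟩
  · intro j
    exact isClosed_eq ((continuous_coord j.1).comp hv) continuous_const
  · intro j
    have h1 : Continuous (fun b : THorn n i => collapse j.1 b.1) := (continuous_collapse j.1).comp hv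
    have h2 : Continuous (fun b : THorn n i => hface φ j.1 j.2 (collapse j.1 b.1)) :=
      (hface φ j.1 j.2).continuous.comp h1
    refine h2.continuousOn.congr ?_
    intro b hb
    have hb' : b.1 j.1 = 0 := hb
    exact glue_eq φ b j.1 j.2 hb'

end glue

section height

variable {n : ℕ} (i : Fin (n + 2))

/-- height above the horn -/
noncomputable def height (b : _root_.stdSimplex ℝ (Fin (n + 2))) : ℝ :=
  Finset.univ.inf' Finset.univ_nonempty (fun k : Fin (n + 1) => b (i.succAbove k))

lemma continuous_height : Continuous (height i) := by
  unfold height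
  exact Continuous.finset_inf'_apply _ (fun k _ => continuous_coord _)

lemma height_nonneg (b) : 0 ≤ height i b := by
  unfold height
  rw [Finset.le_inf'_iff]
  intro k _
  exact _root_.stdSimplex.zero_le b _

lemma height_le (b) (k : Fin (n + 1)) : height i b ≤ b (i.succAbove k) :=
  Finset.inf'_le _ (Finset.mem_univ k)

lemma height_le_one (b) : height i b ≤ 1 :=
  (height_le i b 0).trans (_root_.stdSimplex.le_one b _)

lemma exists_height (b) : ∃ k, height i b = b (i.succAbove k) := by
  obtain ⟨k, -, hk⟩ := Finset.exists_mem_eq_inf' (Finset.univ_nonempty)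
    (fun k : Fin (n + 1) => b (i.succAbove k))
  exact ⟨k, hk⟩

lemma height_eq_zero_iff (b) : height i b = 0 ↔ ∃ j, j ≠ i ∧ b j = 0 := by
  constructor
  · intro h
    obtain ⟨k, hk⟩ := exists_height i b
    exact ⟨_, Fin.succAbove_ne i k, by rw [← hk, h]⟩
  · rintro ⟨j, hj, hb⟩
    obtain ⟨k, rfl⟩ := Fin.exists_succAbove_eq hj
    exact le_antisymm (hb ▸ height_le i b k) (height_nonneg i b)

/-- sliding towards the horn -/
noncomputable def slide (b : _root_.stdSimplex ℝ (Fin (n + 2))) (t : unitInterval) :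
    _root_.stdSimplex ℝ (Fin (n + 2)) :=
  ⟨i.insertNth (α := fun _ => ℝ) (b i + (n + 1) * max (height i b - t) 0)
      (fun k => b (i.succAbove k) - max (height i b - t) 0), by
    have h0 := height_nonneg i b
    have ht := t.2.1
    constructor
    · intro j
      rcases Fin.eq_self_or_eq_succAbove i j with rfl | ⟨k, rfl⟩
      · rw [Fin.insertNth_apply_same]
        have := _root_.stdSimplex.zero_le b j
        positivity
      · rw [Fin.insertNth_apply_succAbove]
        have := height_le i b k
        have : max (height i b - t) 0 ≤ height i b := max_le (by linarith) h0
        linarith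
    · rw [Fin.sum_univ_succAbove _ i]
      simp only [Fin.insertNth_apply_same, Fin.insertNth_apply_succAbove, Finset.sum_sub_distrib]
      have := _root_.stdSimplex.sum_eq_one b
      rw [Fin.sum_univ_succAbove _ i] at this
      simp
      linarith⟩

lemma slide_succAbove (b) (t : unitInterval) (k : Fin (n + 1)) :
    slide i b t (i.succAbove k) = b (i.succAbove k) - max (height i b - t) 0 := by
  change i.insertNth (α := fun _ => ℝ) (b i + (n + 1) * max (height i b - t) 0)
      (fun k => b (i.succAbove k) - max (height i b - t) 0) (i.succAbove k) = _
  rw [Fin.insertNth_apply_succAbove]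

lemma slide_self (b) (t : unitInterval) :
    slide i b t i = b i + (n + 1) * max (height i b - t) 0 := by
  change i.insertNth (α := fun _ => ℝ) (b i + (n + 1) * max (height i b - t) 0)
      (fun k => b (i.succAbove k) - max (height i b - t) 0) i = _
  rw [Fin.insertNth_apply_same]

lemma continuous_slide : Continuous (fun p : _root_.stdSimplex ℝ (Fin (n + 2)) × unitInterval =>
    slide i p.1 p.2) := by
  refine Continuous.subtype_mk ?_ _
  have h1 := (continuous_height i).comp
    (continuous_fst (X := _root_.stdSimplex ℝ (Fin (n + 2))) (Y := unitInterval))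
  have h2 : Continuous (fun p : _root_.stdSimplex ℝ (Fin (n + 2)) × unitInterval =>
      max (height i p.1 - p.2) 0) := by
    simp only [Function.comp_def] at h1
    fun_prop
  have h3 (j) := (continuous_coord j).comp
    (continuous_fst (X := _root_.stdSimplex ℝ (Fin (n + 2))) (Y := unitInterval))
  simp only [Function.comp_def] at h3
  have h4 (c : ℝ) : Continuous (fun p : _root_.stdSimplex ℝ (Fin (n + 2)) × unitInterval =>
      c * max (height i p.1 - p.2) 0) := continuous_const.mul h2
  exact Continuous.finInsertNth i ((h3 i).add (h4 _))
    (continuous_pi fun k => (h3 (i.succAbove k)).sub h2)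

lemma slide_of_le (b) (t : unitInterval) (h : height i b ≤ t) : slide i b t = b := by
  have hm : max (height i b - t) 0 = 0 := max_eq_right (by linarith)
  ext j
  rcases Fin.eq_self_or_eq_succAbove i j with rfl | ⟨k, rfl⟩
  · rw [slide_self, hm]; simp
  · rw [slide_succAbove, hm]; simp

lemma slide_zero_mem (b) : ∃ j, j ≠ i ∧ slide i b 0 j = 0 := by
  obtain ⟨k, hk⟩ := exists_height i b
  refine ⟨_, Fin.succAbove_ne i k, ?_⟩
  rw [slide_succAbove, max_eq_left (by simpa using height_nonneg i b), ← hk]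
  simp

end height

section ball

/-- the ball -/
abbrev Ball (n : ℕ) := ↥(Metric.closedBall (0 : EuclideanSpace ℝ (Fin n)) 1)

/-- the simplex lies in the ball -/
noncomputable def toBall {n : ℕ} (b : _root_.stdSimplex ℝ (Fin n)) : Ball n :=
  ⟨WithLp.toLp 2 (fun j => b j), by
    rw [mem_closedBall_zero_iff, EuclideanSpace.norm_eq, Real.sqrt_le_left (by norm_num), one_pow]
    rw [← _root_.stdSimplex.sum_eq_one b]
    refine Finset.sum_le_sum fun j _ => ?_
    have h0 := _root_.stdSimplex.zero_le b j
    have h1 := _root_.stdSimplex.le_one b j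
    simp only [Real.norm_eq_abs, sq_abs]
    nlinarith⟩

lemma continuous_toBall {n : ℕ} : Continuous (toBall (n := n)) := by
  refine Continuous.subtype_mk ?_ _
  exact (PiLp.continuous_toLp 2 _).comp (continuous_pi fun j => continuous_coord j)

/-- positive-part sum -/
noncomputable def psum {n : ℕ} (x : Fin n → ℝ) : ℝ := ∑ j, max (x j) 0

/-- retraction of the euclidean space to the simplex -/
noncomputable def toSimp {n : ℕ} (x : Fin (n + 1) → ℝ) : _root_.stdSimplex ℝ (Fin (n + 1)) :=
  ⟨fun j => (max (x j) 0 + max (1 - psum x) 0 / (n + 1)) / max (psum x) 1, by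
    constructor
    · intro j
      positivity
    · rw [← Finset.sum_div, Finset.sum_add_distrib]
      change (psum x + _) / _ = 1
      simp only [Finset.sum_const, Finset.card_univ, Fintype.card_fin, nsmul_eq_mul]
      push_cast
      rw [mul_div_cancel₀ _ (by positivity), div_eq_one_iff_eq (by positivity)]
      rcases le_total (psum x) 1 with h | h
      · rw [max_eq_left (by linarith), max_eq_right h]; ring
      · rw [max_eq_right (by linarith), max_eq_left h]; ring⟩

lemma continuous_toSimp {n : ℕ} : Continuous (toSimp (n := n)) := by
  refine Continuous.subtype_mk ?_ _
  have : Continuous (psum (n := n + 1)) := by unfold psum; fun_prop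
  refine continuous_pi fun j => ?_
  refine Continuous.div (by fun_prop) (by fun_prop) (fun x => by positivity)

lemma toSimp_coe {n : ℕ} (b : _root_.stdSimplex ℝ (Fin (n + 1))) : toSimp (fun j => b j) = b := by
  have h1 : psum (fun j => b j) = 1 := by
    rw [psum, ← _root_.stdSimplex.sum_eq_one b]
    exact Finset.sum_congr rfl fun j _ => max_eq_left (_root_.stdSimplex.zero_le b j)
  ext j
  change (max (b j) 0 + max (1 - psum (fun j => b j)) 0 / (n + 1)) / max (psum (fun j => b j)) 1 = _
  rw [h1, max_eq_left (_root_.stdSimplex.zero_le b j)]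
  simp

end ball

theorem kan_of_serre {X Y : TopCat.{0}} (f : X ⟶ Y) (hf : IsSerreFibration f) :
    IsKanFibration (TopCat.toSSet.map f) := by
  intro n i
  constructor
  intro φ ψ sq
  let h : C(_root_.stdSimplex ℝ (Fin (n + 2)), Y) := simpEquiv Y (n + 1) ψ
  have hface_f (j) (hj : j ≠ i) (a) :
      f (hface φ j hj a) = h (_root_.stdSimplex.map j.succAbove a) := by
    rw [hface, ← simpEquiv_comp, Category.assoc, sq.w, SSet.horn.ι_ι_assoc, simpEquiv_δ]
  let ρ : Ball (n + 2) → _root_.stdSimplex ℝ (Fin (n + 2)) := fun x => toSimp (fun j => x.1 j)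
  have hρ : Continuous ρ := continuous_toSimp.comp
    ((PiLp.continuous_ofLp 2 _).comp continuous_subtype_val)
  have hρ' (b) : ρ (toBall b) = b := toSimp_coe b
  let top : disk (n + 2) ⟶ X := TopCat.ofHom ⟨fun x : Ball (n + 2) =>
    glue φ ⟨slide i (ρ x) 0, slide_zero_mem i _⟩, by
      refine (continuous_glue φ).comp (Continuous.subtype_mk ?_ _)
      exact (continuous_slide i).comp (hρ.prodMk continuous_const)⟩
  let bot : TopCat.of (Ball (n + 2) × unitInterval) ⟶ Y := TopCat.ofHom
    ⟨fun p => h (slide i (ρ p.1) p.2), by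
      have h1 : Continuous (fun p : Ball (n + 2) × unitInterval => (ρ p.1, p.2)) :=
        (hρ.comp continuous_fst).prodMk continuous_snd
      have h2 : Continuous (fun p : Ball (n + 2) × unitInterval => slide i (ρ p.1) p.2) :=
        (continuous_slide i).comp h1
      exact h.continuous.comp h2⟩
  have sq' : CommSq top (diskInclusion (n + 2)) f bot := ⟨by
    ext x
    suffices H : ∀ x : Ball (n + 2),
      f (glue φ ⟨slide i (ρ x) 0, slide_zero_mem i _⟩) = h (slide i (ρ x) 0) from H x
    clear x
    intro x
    obtain ⟨j, hj, hb⟩ := slide_zero_mem i (ρ x)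
    rw [glue_eq φ _ j hj hb, hface_f, map_collapse j _ hb]⟩
  have := hf (n + 2)
  let L := sq'.lift
  have hL0 (x : Ball (n + 2)) : L (x, 0) = top x :=
    ConcreteCategory.congr_hom sq'.fac_left x
  have hL1 (p : Ball (n + 2) × unitInterval) : f (L p) = bot p :=
    ConcreteCategory.congr_hom sq'.fac_right p
  let ht : _root_.stdSimplex ℝ (Fin (n + 2)) → unitInterval :=
    fun b => ⟨height i b, height_nonneg i b, height_le_one i b⟩
  let M : C(_root_.stdSimplex ℝ (Fin (n + 2)), X) :=
    ⟨fun b => L (toBall b, ht b), by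
      refine L.hom.continuous.comp (continuous_toBall.prodMk ?_)
      exact Continuous.subtype_mk (continuous_height i) _⟩
  refine ⟨⟨⟨(simpEquiv X (n + 1)).symm M, ?_, ?_⟩⟩⟩
  · apply SSet.horn.hom_ext'
    intro j hj
    rw [SSet.horn.ι_ι_assoc]
    apply (simpEquiv X n).injective
    ext a
    rw [simpEquiv_δ, Equiv.apply_symm_apply]
    set b := _root_.stdSimplex.map j.succAbove a with hb
    have hbj : b j = 0 := map_succAbove_self j a
    have h0 : height i b = 0 := (height_eq_zero_iff i b).2 ⟨j, hj, hbj⟩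
    have h0' : ht b = 0 := Subtype.ext h0
    have hs : slide i b 0 = b := slide_of_le i b 0 (by rw [h0]; simp)
    change L (toBall b, ht b) = hface φ j hj a
    rw [h0', hL0]
    change glue φ ⟨slide i (ρ (toBall b)) 0, slide_zero_mem i _⟩ = _
    have hs' : slide i (ρ (toBall b)) 0 = b := by rw [hρ', hs]
    rw [glue_eq φ _ j hj ((congrArg (fun c => c j) hs').trans hbj)]
    simp only [hs']
    rw [hb, collapse_map]
  · apply (simpEquiv Y (n + 1)).injective
    ext b
    rw [simpEquiv_comp, Equiv.apply_symm_apply]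
    change f (L (toBall b, ht b)) = h b
    rw [hL1]
    change h (slide i (ρ (toBall b)) (ht b)) = h b
    rw [hρ', slide_of_le i b _ le_rfl]

section embed

variable {n : ℕ}

/-- scaling constant -/
noncomputable def dl (n : ℕ) : ℝ := 1 / (3 * (n + 1))

lemma dl_pos : 0 < dl n := by unfold dl; positivity

/-- pad by zero -/
noncomputable def pad (x : Ball n) : Fin (n + 1) → ℝ := Fin.cons 0 (fun k => x.1 k)

lemma abs_pad (x : Ball n) (k) : |pad x k| ≤ 1 := by
  refine Fin.cases ?_ (fun k => ?_) k
  · simp [pad]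
  · have h1 := PiLp.norm_apply_le x.1 k
    have h2 := mem_closedBall_zero_iff.1 x.2
    rw [Real.norm_eq_abs] at h1
    simpa [pad] using h1.trans h2

lemma continuous_pad : Continuous (pad (n := n)) := by
  refine continuous_pi fun k => ?_
  refine Fin.cases ?_ (fun k => ?_) k
  · simpa [pad] using continuous_const
  · simp only [pad, Fin.cons_succ]
    exact (continuous_apply k).comp ((PiLp.continuous_ofLp 2 _).comp continuous_subtype_val)

/-- minimum of padded coordinates -/
noncomputable def pmin (x : Ball n) : ℝ := Finset.univ.inf' Finset.univ_nonempty (pad x)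

lemma pmin_le (x : Ball n) (k) : pmin x ≤ pad x k := Finset.inf'_le _ (Finset.mem_univ k)

lemma exists_pmin (x : Ball n) : ∃ k, pmin x = pad x k := by
  obtain ⟨k, -, hk⟩ := Finset.exists_mem_eq_inf' (Finset.univ_nonempty) (pad x)
  exact ⟨k, hk⟩

lemma continuous_pmin : Continuous (pmin (n := n)) := by
  unfold pmin
  exact Continuous.finset_inf'_apply _ (fun k _ => (continuous_apply k).comp continuous_pad)

/-- coordinates of the embedding -/
noncomputable def ecoord (x : Ball n) (t : unitInterval) (k : Fin (n + 1)) : ℝ :=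
  dl n * (pad x k - pmin x + t)

/-- embedding of the cylinder in the simplex -/
noncomputable def embed (x : Ball n) (t : unitInterval) : _root_.stdSimplex ℝ (Fin (n + 2)) :=
  ⟨Fin.cons (1 - ∑ k, ecoord x t k) (ecoord x t), by
    constructor
    · intro j
      refine Fin.cases ?_ (fun k => ?_) j
      · rw [Fin.cons_zero, sub_nonneg]
        have : ∀ k ∈ Finset.univ, ecoord x t k ≤ dl n * 3 := by
          intro k _
          obtain ⟨l, hl⟩ := exists_pmin x
          have h1 := abs_le.1 (abs_pad x k)
          have h2 := abs_le.1 (abs_pad x l)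
          have h3 := t.2.2
          refine mul_le_mul_of_nonneg_left ?_ dl_pos.le
          linarith
        refine (Finset.sum_le_card_nsmul _ _ _ this).trans ?_
        simp only [Finset.card_univ, Fintype.card_fin, nsmul_eq_mul, dl]
        push_cast
        apply le_of_eq
        field_simp
      · rw [Fin.cons_succ]
        have h1 := pmin_le x k
        have h3 := t.2.1
        exact mul_nonneg dl_pos.le (by linarith)
    · rw [Fin.sum_univ_succ]
      simp⟩

lemma continuous_embed : Continuous (fun p : Ball n × unitInterval => embed p.1 p.2) := by
  refine Continuous.subtype_mk ?_ _
  have h (k : Fin (n + 1)) : Continuous (fun p : Ball n × unitInterval => ecoord p.1 p.2 k) := by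
    have h1 : Continuous (fun p : Ball n × unitInterval => pad p.1 k) :=
      (continuous_apply k).comp (continuous_pad.comp continuous_fst)
    have h2 : Continuous (fun p : Ball n × unitInterval => pmin p.1) :=
      continuous_pmin.comp continuous_fst
    unfold ecoord
    fun_prop
  refine continuous_pi fun j => ?_
  refine Fin.cases ?_ (fun k => ?_) j
  · simp only [Fin.cons_zero]
    fun_prop
  · simp only [Fin.cons_succ]
    exact h k

lemma embed_succ (x : Ball n) (t) (k : Fin (n + 1)) :
    embed x t k.succ = dl n * (pad x k - pmin x + t) := rfl

lemma height_embed (x : Ball n) (t) : height 0 (embed x t) = dl n * t := by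
  apply le_antisymm
  · obtain ⟨k, hk⟩ := exists_pmin x
    refine (height_le 0 _ k).trans (le_of_eq ?_)
    rw [Fin.zero_succAbove, embed_succ, hk]
    ring
  · obtain ⟨k, hk⟩ := exists_height 0 (embed x t)
    rw [hk, Fin.zero_succAbove, embed_succ]
    have := pmin_le x k
    exact mul_le_mul_of_nonneg_left (by linarith) dl_pos.le

/-- radial retraction -/
noncomputable def radial (x : EuclideanSpace ℝ (Fin n)) : Ball n :=
  ⟨(max 1 ‖x‖)⁻¹ • x, by
    have : 0 < max 1 ‖x‖ := by positivity
    rw [mem_closedBall_zero_iff, norm_smul, norm_inv, Real.norm_of_nonneg this.le,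
      inv_mul_le_iff₀ this]
    simp⟩

lemma continuous_radial : Continuous (radial (n := n)) := by
  refine Continuous.subtype_mk ?_ _
  have h : Continuous (fun x : EuclideanSpace ℝ (Fin n) => max 1 ‖x‖) := by fun_prop
  exact Continuous.smul (h.inv₀ (fun x => by positivity)) continuous_id

lemma radial_coe (x : Ball n) : radial x.1 = x := by
  apply Subtype.ext
  have := mem_closedBall_zero_iff.1 x.2
  simp [radial, max_eq_left this]

/-- first component of the retraction -/
noncomputable def back (b : _root_.stdSimplex ℝ (Fin (n + 2))) : Ball n :=
  radial (WithLp.toLp 2 (fun k : Fin n => (b k.succ.succ - b (Fin.succ 0)) / dl n))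

lemma continuous_back : Continuous (back (n := n)) := by
  refine continuous_radial.comp ((PiLp.continuous_toLp 2 _).comp (continuous_pi fun k => ?_))
  exact ((continuous_coord _).sub (continuous_coord _)).div_const _

lemma back_embed (x : Ball n) (t) : back (embed x t) = x := by
  have : (WithLp.toLp 2 (fun k : Fin n => (embed x t k.succ.succ - embed x t (Fin.succ 0)) / dl n))
      = x.1 := by
    ext k
    have hd := (dl_pos (n := n)).ne'
    simp only [embed_succ]
    simp only [pad, Fin.cons_succ, Fin.cons_zero]
    field_simp
    ring
  rw [back, this, radial_coe]

/-- second component of the retraction -/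
noncomputable def backT (b : _root_.stdSimplex ℝ (Fin (n + 2))) : unitInterval :=
  ⟨min 1 (height 0 b / dl n), by
    have := div_nonneg (height_nonneg 0 b) (dl_pos (n := n)).le
    exact ⟨le_min zero_le_one this, min_le_left _ _⟩⟩

lemma continuous_backT : Continuous (backT (n := n)) := by
  refine Continuous.subtype_mk ?_ _
  exact continuous_const.min ((continuous_height 0).div_const _)

lemma backT_embed (x : Ball n) (t) : backT (embed x t) = t := by
  apply Subtype.ext
  have hd := (dl_pos (n := n)).ne'
  simp only [backT, height_embed]
  rw [mul_div_cancel_left₀ _ hd, min_eq_right t.2.2]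

lemma backT_zero (b : _root_.stdSimplex ℝ (Fin (n + 2))) (j) (hj : j ≠ 0) (hb : b j = 0) :
    backT b = 0 := by
  apply Subtype.ext
  simp [backT, (height_eq_zero_iff 0 b).2 ⟨j, hj, hb⟩]

end embed

theorem serre_of_kan {X Y : TopCat.{0}} (f : X ⟶ Y) (hf : IsKanFibration (TopCat.toSSet.map f)) :
    IsSerreFibration f := by
  intro n
  constructor
  intro g h sq
  have hw (x : Ball n) : f (g x) = h (x, 0) := ConcreteCategory.congr_hom sq.w x
  let u : C(_root_.stdSimplex ℝ (Fin (n + 2)), X) :=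
    ⟨fun b => g (back b), g.hom.continuous.comp continuous_back⟩
  let v : C(_root_.stdSimplex ℝ (Fin (n + 2)), Y) :=
    ⟨fun b => h (back b, backT b), h.hom.continuous.comp
      (continuous_back.prodMk continuous_backT)⟩
  have sq' : CommSq ((SSet.horn.{0} (n + 1) 0).ι ≫ (simpEquiv X (n + 1)).symm u)
      (SSet.horn.{0} (n + 1) 0).ι (TopCat.toSSet.map f) ((simpEquiv Y (n + 1)).symm v) := ⟨by
    apply SSet.horn.hom_ext'
    intro j hj
    rw [Category.assoc, SSet.horn.ι_ι_assoc, SSet.horn.ι_ι_assoc]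
    apply (simpEquiv Y n).injective
    ext a
    rw [← Category.assoc, simpEquiv_comp, simpEquiv_δ, simpEquiv_δ, Equiv.apply_symm_apply,
      Equiv.apply_symm_apply]
    change f (g (back _)) = h (back _, backT _)
    rw [hw, backT_zero _ j hj (map_succAbove_self j a)]⟩
  have := hf n 0
  let L : C(_root_.stdSimplex ℝ (Fin (n + 2)), X) := simpEquiv X (n + 1) sq'.lift
  have hL0 (b : _root_.stdSimplex ℝ (Fin (n + 2))) (j) (hj : j ≠ 0) (hb : b j = 0) :
      L b = g (back b) := by
    have h1 := SSet.horn.ι 0 j hj ≫= sq'.fac_left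
    rw [SSet.horn.ι_ι_assoc, SSet.horn.ι_ι_assoc] at h1
    have h2 := congrArg (fun φ => simpEquiv X n φ (collapse j b)) h1
    simp only [simpEquiv_δ, Equiv.apply_symm_apply, map_collapse j b hb] at h2
    exact h2
  have hL1 (b : _root_.stdSimplex ℝ (Fin (n + 2))) : f (L b) = h (back b, backT b) := by
    have h2 := congrArg (fun φ => simpEquiv Y (n + 1) φ b) sq'.fac_right
    simp only [simpEquiv_comp, Equiv.apply_symm_apply] at h2
    exact h2
  refine ⟨⟨⟨TopCat.ofHom ⟨fun p => L (embed p.1 p.2), L.continuous.comp continuous_embed⟩,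
    ?_, ?_⟩⟩⟩
  · ext x
    suffices H : ∀ x : Ball n, L (embed x 0) = g x from H x
    clear x
    intro x
    obtain ⟨j, hj, hb⟩ := (height_eq_zero_iff 0 (embed x 0)).1 (by simp [height_embed])
    rw [hL0 _ j hj hb, back_embed]
  · ext p
    change f (L (embed p.1 p.2)) = h p
    rw [hL1, back_embed, backT_embed]

end HopfModel

open HopfModel in
/-- A continuous map `f : X → Y` is a Serre fibration if and only if the
induced map `S(f) : S(X) → S(Y)` between singular simplicial sets is a Kan fibration. -/
theorem isSerreFibration_iff_isKanFibration_toSSet_map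
    {X Y : TopCat} (f : X ⟶ Y) :
    IsSerreFibration f ↔ IsKanFibration (TopCat.toSSet.map f) :=
  ⟨kan_of_serre f, serre_of_kan f⟩
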